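/- arXiv:1902.05754 — 2 statements merged into one kernel-verified Lean document; each statement's English description precedes it below -/
import Mathlib

section
/- Let π : ℝ^d → ℝ be a twice continuously differentiable probability density whose Hessian H_π satisfies ‖H_π(x)‖ ≤ C < ∞ for all x. Let ψ : ℝ^d → ℝ be twice continuously differentiable and strictly convex, with Bregman divergence d_ψ(z, θ) := ψ(z) − ψ(θ) − ∇ψ(θ)ᵀ(z − θ), and suppose uᵀ H_ψ(x) u ≥ c ‖u‖₂² for all x, u with c > 0, where H_ψ is the Hessian of ψ. Fix θ ∈ ℝ^d at which H_π is continuous, and for ρ > 0 define π_ρ(θ) := (∫_{ℝ^d} π(z) exp(−d_ψ(z, θ)/ρ) dz) / (∫_{ℝ^d} exp(−d_ψ(z, θ)/ρ) dz). If moreover for every ρ > 0 one has ∫_{ℝ^d} u exp(−d_ψ(θ − √ρ u, θ)/ρ) du = 0, then lim_{ρ → 0⁺} (π_ρ(θ) − π(θ))/ρ = (1/2) Trace(H_π(θ) H_ψ(θ)^{-1}). -/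
/-!
The substitution `z = θ - √ρ u` turns the kernel `exp (-d_ψ(z, θ) / ρ)` into `exp (-R_ψ(ρ, u))`,
where `R_f(ρ, u) = (f (θ - √ρ u) - f θ + √ρ f'(θ) u) / ρ` is the second-order Taylor remainder of
`f` rescaled by `ρ` (`taylorRem`). Expanding `p` around `θ` as well, the constant term cancels
`p θ` and the linear term integrates to zero because the kernel is centered, so that
`(p_ρ(θ) - p(θ)) / ρ = ∫ R_p exp (-R_ψ) / ∫ exp (-R_ψ)` holds exactly for each `ρ > 0`
(`bias_eq`).

By the Lagrange form of the remainder, `R_f(ρ, u) = f''(ξ)(u, u) / 2` for some `ξ` between `θ` and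
`θ - √ρ u`. Hence `|R_p| ≤ C ‖u‖² / 2`, `R_ψ ≥ c ‖u‖² / 2`, and both remainders converge pointwise
to half the second derivative at `θ`. Dominated convergence (`tendsto_gauss`) gives the limit
`(1/2) ∫ p''(u, u) exp (-ψ''(u, u) / 2) / ∫ exp (-ψ''(u, u) / 2)`. This is half the expectation of
a quadratic form under a Gaussian with precision matrix `H_ψ`; integration by parts identifies
the covariance as `H_ψ⁻¹`, so the limit is `(1/2) Tr (H_p H_ψ⁻¹)` (`gauss_trace`).
-/


open MeasureTheory Filter RealInnerProductSpace

noncomputable section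

/-- ℝ^d with the Euclidean (ℓ²) structure. -/
abbrev En (d : ℕ) := EuclideanSpace ℝ (Fin d)

/-! ### Second-order Taylor expansion with Lagrange remainder -/

/-- Rolle's theorem for `t ↦ f (x + t v) - t f'(x) v - K t²`, with `K` chosen so that the values
at `0` and `1` agree, followed by the mean value theorem for `t ↦ f'(x + t v) v`. -/
theorem taylor_two {d : ℕ} {f : En d → ℝ} (hf : ContDiff ℝ 2 f) (x v : En d) :
    ∃ t ∈ Set.Ioo (0 : ℝ) 1, f (x + v) - f x - fderiv ℝ f x v
      = (1 / 2) * fderiv ℝ (fderiv ℝ f) (x + t • v) v v := by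
  have h1 : ∀ t : ℝ, HasDerivAt (fun t : ℝ => f (x + t • v)) (fderiv ℝ f (x + t • v) v) t := by
    intro t
    have hl : HasDerivAt (fun t : ℝ => x + t • v) v t := by
      simpa using ((hasDerivAt_id t).smul_const v).const_add x
    exact ((hf.differentiable (by norm_num)).differentiableAt.hasFDerivAt).comp_hasDerivAt t hl
  have h2 : ∀ t : ℝ, HasDerivAt (fun t : ℝ => fderiv ℝ f (x + t • v) v)
      (fderiv ℝ (fderiv ℝ f) (x + t • v) v v) t := by
    intro t
    have hl : HasDerivAt (fun t : ℝ => x + t • v) v t := by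
      simpa using ((hasDerivAt_id t).smul_const v).const_add x
    have hd : Differentiable ℝ (fderiv ℝ f) :=
      (hf.fderiv_right (m := 1) (by norm_num)).differentiable (by norm_num)
    have := (hd.differentiableAt.hasFDerivAt).comp_hasDerivAt t hl
    simpa using this.clm_apply (hasDerivAt_const t v)
  set K : ℝ := f (x + v) - f x - fderiv ℝ f x v with hK
  have h3 : ∀ t : ℝ, HasDerivAt
      (fun t : ℝ => f (x + t • v) - t * fderiv ℝ f x v - K * t ^ 2)
      (fderiv ℝ f (x + t • v) v - fderiv ℝ f x v - K * (2 * t)) t := by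
    intro t
    have := ((h1 t).sub ((hasDerivAt_id t).mul_const (fderiv ℝ f x v))).sub
      (((hasDerivAt_id t).pow 2).const_mul K)
    convert! this using 1
    simp
  obtain ⟨s, hs, hs'⟩ := exists_hasDerivAt_eq_zero (a := (0 : ℝ)) (b := 1) one_pos
    (continuous_iff_continuousAt.2 fun t => (h3 t).continuousAt).continuousOn
    (by simp [hK]) (fun t _ => h3 t)
  obtain ⟨t, ht, ht'⟩ := exists_hasDerivAt_eq_slope _ _ hs.1
    (continuous_iff_continuousAt.2 fun t => (h2 t).continuousAt).continuousOn
    (fun t _ => h2 t)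
  refine ⟨t, ⟨ht.1, ht.2.trans hs.2⟩, ?_⟩
  rw [ht']
  have : s ≠ 0 := hs.1.ne'
  simp only [zero_smul, add_zero]
  field_simp
  linarith

/-! ### Integrability against Gaussian weights -/

theorem integrable_gauss {d : ℕ} {a : ℝ} (ha : 0 < a) :
    Integrable (fun u : En d => Real.exp (-a * ‖u‖ ^ 2)) := by
  -- The known value of the integral is positive, whereas a non-integrable function would give `0`.
  by_contra h
  have h1 := GaussianFourier.integral_rexp_neg_mul_sq_norm (V := En d) ha
  rw [integral_undef h] at h1
  have : 0 < (Real.pi / a) ^ (Module.finrank ℝ (En d) / 2 : ℝ) := by positivity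
  linarith

/-- Half of the Gaussian absorbs the quadratic factor. -/
theorem integrable_sq_gauss {d : ℕ} {a : ℝ} (ha : 0 < a) :
    Integrable (fun u : En d => (1 + ‖u‖ ^ 2) * Real.exp (-a * ‖u‖ ^ 2)) := by
  refine ((integrable_gauss (d := d) (half_pos ha)).const_mul (1 + 2 / a)).mono'
    (by fun_prop) (Eventually.of_forall fun u => ?_)
  rw [Real.norm_of_nonneg (by positivity)]
  have e : Real.exp (-a * ‖u‖ ^ 2)
      = Real.exp (-(a / 2) * ‖u‖ ^ 2) * Real.exp (-(a / 2 * ‖u‖ ^ 2)) := by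
    rw [← Real.exp_add]; ring_nf
  have h1 : 1 + ‖u‖ ^ 2 ≤ (1 + 2 / a) * Real.exp (a / 2 * ‖u‖ ^ 2) := by
    have h2 := Real.add_one_le_exp (a / 2 * ‖u‖ ^ 2)
    have h3 : ‖u‖ ^ 2 = 2 / a * (a / 2 * ‖u‖ ^ 2) := by field_simp
    have h4 : 0 ≤ a / 2 * ‖u‖ ^ 2 := by positivity
    have h5 : 0 < 2 / a := by positivity
    nlinarith
  rw [e, Real.exp_neg]
  have hp := Real.exp_pos (a / 2 * ‖u‖ ^ 2)
  calc _ = (1 + ‖u‖ ^ 2) * (Real.exp (a / 2 * ‖u‖ ^ 2))⁻¹ * Real.exp (-(a / 2) * ‖u‖ ^ 2) := by ring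
    _ ≤ _ := by
      gcongr
      rwa [← div_eq_mul_inv, div_le_iff₀ hp]

/-- Functions of at most quadratic growth are integrable against `exp (-q)` when `q` dominates a
positive multiple of `‖u‖²`. -/
theorem integrable_of_growth {d : ℕ} {F q : En d → ℝ} {K a : ℝ} (ha : 0 < a)
    (hF : Continuous F) (hq : Continuous q)
    (hFK : ∀ u, |F u| ≤ K * (1 + ‖u‖ ^ 2)) (hqa : ∀ u, a * ‖u‖ ^ 2 ≤ q u) :
    Integrable (fun u => F u * Real.exp (-q u)) := by
  refine ((integrable_sq_gauss (d := d) ha).const_mul K).mono'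
    (by fun_prop) (Eventually.of_forall fun u => ?_)
  rw [norm_mul, Real.norm_eq_abs, Real.norm_of_nonneg (Real.exp_pos _).le, ← mul_assoc]
  have := hqa u
  gcongr
  · exact (abs_nonneg _).trans (hFK u)
  · exact hFK u
  · linarith

theorem linear_growth {d : ℕ} (L : En d →L[ℝ] ℝ) (u : En d) : |L u| ≤ ‖L‖ * (1 + ‖u‖ ^ 2) := by
  rw [← Real.norm_eq_abs]
  refine (L.le_opNorm u).trans ?_
  gcongr
  nlinarith [sq_nonneg (‖u‖ - 1), norm_nonneg u]

theorem prod_growth {d : ℕ} (L M : En d →L[ℝ] ℝ) (u : En d) :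
    |L u * M u| ≤ (‖L‖ * ‖M‖) * (1 + ‖u‖ ^ 2) := by
  rw [← Real.norm_eq_abs, norm_mul]
  calc _ ≤ (‖L‖ * ‖u‖) * (‖M‖ * ‖u‖) := by
        gcongr <;> exact ContinuousLinearMap.le_opNorm _ _
    _ = (‖L‖ * ‖M‖) * ‖u‖ ^ 2 := by ring
    _ ≤ _ := by gcongr; linarith

/-! ### Second moments of a Gaussian -/

/-- The matrix of a bilinear form in the standard basis: entry `(i, j)` is `A eᵢ eⱼ`. -/
def formMatrix {d : ℕ} (A : En d →L[ℝ] En d →L[ℝ] ℝ) : Matrix (Fin d) (Fin d) ℝ :=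
  fun i j => A (EuclideanSpace.single i 1) (EuclideanSpace.single j 1)

theorem eucl_sum {d : ℕ} (u : En d) : u = ∑ i, u i • EuclideanSpace.single i (1 : ℝ) := by
  ext j
  simp [Finset.sum_apply, Pi.single_apply]

section Gauss

variable {d : ℕ} {B : En d →L[ℝ] En d →L[ℝ] ℝ} {c : ℝ}

/-- Integration by parts in the direction `v`: the derivative of `exp (-B u u / 2)` along `v` is
`-(B v u) exp (-B u u / 2)`, by symmetry of `B`. -/
theorem gauss_ibp (hB : ∀ u v, B u v = B v u) (hc : 0 < c) (hcB : ∀ u, c * ‖u‖ ^ 2 ≤ B u u)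
    (L : En d →L[ℝ] ℝ) (v : En d) :
    ∫ u, (B v u * L u) * Real.exp (-(1 / 2 * B u u))
      = L v * ∫ u, Real.exp (-(1 / 2 * B u u)) := by
  have hq : Continuous fun u => 1 / 2 * B u u := by fun_prop
  have hlow : ∀ u, c / 2 * ‖u‖ ^ 2 ≤ 1 / 2 * B u u := fun u => by linarith [hcB u]
  have hg : ∀ u, HasFDerivAt (fun u => Real.exp (-(1 / 2 * B u u)))
      (Real.exp (-(1 / 2 * B u u)) • -(B u)) u := by
    intro u
    have h := B.hasFDerivAt_of_bilinear (hasFDerivAt_id u) (hasFDerivAt_id u)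
    have h' := ((h.const_mul (1 / 2)).neg).exp
    refine h'.congr_fderiv ?_
    ext w
    simp [hB w u]
    ring
  have hi : Integrable (fun u => (B v u * L u) * Real.exp (-(1 / 2 * B u u))) :=
    integrable_of_growth (half_pos hc) (by fun_prop) hq (prod_growth (B v) L) hlow
  have h0 : Integrable (fun u => (1 : ℝ) * Real.exp (-(1 / 2 * B u u))) :=
    integrable_of_growth (K := 1) (half_pos hc) (by fun_prop) hq
      (fun u => by simp) hlow
  have hL := integrable_of_growth (half_pos hc) L.continuous hq (linear_growth L) hlow
  have key := integral_bilinear_hasFDerivAt_right_eq_neg_left_of_integrable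
    (μ := (volume : Measure (En d))) (f := L) (f' := fun _ => L)
    (g := fun u => Real.exp (-(1 / 2 * B u u)))
    (g' := fun u => Real.exp (-(1 / 2 * B u u)) • -(B u)) (v := v)
    (B := ContinuousLinearMap.mul ℝ ℝ)
    (by simpa using h0.const_mul (L v))
    (by
      refine hi.neg.congr (Eventually.of_forall fun u => ?_)
      simp [hB v u]; ring)
    (by simpa using hL)
    (fun u _ => L.hasFDerivAt) (fun u _ => hg u)
  simp only [ContinuousLinearMap.mul_apply', integral_const_mul] at key
  rw [← neg_inj, ← key, ← integral_neg]
  congr 1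
  ext u
  simp [hB v u]
  ring

theorem gauss_pos (hc : 0 < c) (hcB : ∀ u, c * ‖u‖ ^ 2 ≤ B u u) :
    0 < ∫ u, Real.exp (-(1 / 2 * B u u)) := by
  have h0 : Integrable (fun u => (1 : ℝ) * Real.exp (-(1 / 2 * B u u))) :=
    integrable_of_growth (K := 1) (half_pos hc) (by fun_prop) (by fun_prop)
      (fun u => by simp) (fun u => by linarith [hcB u])
  exact integral_exp_pos (by simpa using h0)

/-- The covariance matrix of the Gaussian with density proportional to `exp (-B u u / 2)` is the
inverse of the matrix of `B`; hence the mean of `A u u` is `Tr (A B⁻¹)`. -/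
theorem gauss_trace (hB : ∀ u v, B u v = B v u) (hc : 0 < c) (hcB : ∀ u, c * ‖u‖ ^ 2 ≤ B u u)
    (A : En d →L[ℝ] En d →L[ℝ] ℝ) :
    ∫ u, A u u * Real.exp (-(1 / 2 * B u u))
      = Matrix.trace (formMatrix A * (formMatrix B)⁻¹) * ∫ u, Real.exp (-(1 / 2 * B u u)) := by
  set Z := ∫ u, Real.exp (-(1 / 2 * B u u)) with hZ
  have hZ0 : 0 < Z := gauss_pos hc hcB
  have hlow : ∀ u, c / 2 * ‖u‖ ^ 2 ≤ 1 / 2 * B u u := fun u => by linarith [hcB u]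
  obtain ⟨M, hM⟩ : ∃ M : Matrix (Fin d) (Fin d) ℝ,
      ∀ i j, M i j = ∫ u : En d, (u i * u j) * Real.exp (-(1 / 2 * B u u)) :=
    ⟨Matrix.of fun i j => _, fun i j => rfl⟩
  have hint : ∀ i j, Integrable fun u : En d => (u i * u j) * Real.exp (-(1 / 2 * B u u)) :=
    fun i j => integrable_of_growth (half_pos hc) (by fun_prop) (by fun_prop)
      (prod_growth (EuclideanSpace.proj i) (EuclideanSpace.proj j)) hlow
  -- `gauss_ibp` with `v = eᵢ` and `L` the `j`-th coordinate is the `(i, j)` entry of this identity.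
  have hBM : formMatrix B * M = Z • 1 := by
    ext i j
    have h := gauss_ibp hB hc hcB (EuclideanSpace.proj j) (EuclideanSpace.single i 1)
    rw [Matrix.mul_apply, Matrix.smul_apply, Matrix.one_apply]
    simp only [hM, ← integral_const_mul]
    rw [← integral_finsetSum _ fun k _ => (hint k j).const_mul _]
    calc _ = ∫ u, (B (EuclideanSpace.single i 1) u * (EuclideanSpace.proj (𝕜 := ℝ) j) u) *
          Real.exp (-(1 / 2 * B u u)) := by
          congr 1
          ext u
          have hu : B (EuclideanSpace.single i 1) u
              = ∑ k, u k * formMatrix B i k := by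
            conv_lhs => rw [eucl_sum u]
            simp [formMatrix]
          rw [hu, Finset.sum_mul, Finset.sum_mul]
          refine Finset.sum_congr rfl fun k _ => ?_
          simp
          ring
      _ = _ := by
          rw [h, ← hZ]
          simp [eq_comm]
  have hinv : (formMatrix B)⁻¹ = Z⁻¹ • M := by
    apply Matrix.inv_eq_right_inv
    rw [Matrix.mul_smul, hBM, smul_smul, inv_mul_cancel₀ hZ0.ne', one_smul]
  rw [hinv, Matrix.mul_smul, Matrix.trace_smul, smul_eq_mul]
  have : ∫ u, A u u * Real.exp (-(1 / 2 * B u u)) = Matrix.trace (formMatrix A * M) := by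
    simp only [Matrix.trace, Matrix.diag, Matrix.mul_apply, hM, ← integral_const_mul]
    have : ∀ i j, Integrable fun u : En d =>
        formMatrix A i j * ((u j * u i) * Real.exp (-(1 / 2 * B u u))) :=
      fun i j => (hint j i).const_mul _
    simp_rw [← integral_finsetSum Finset.univ fun j _ => this _ j]
    rw [← integral_finsetSum _ fun i _ => integrable_finsetSum _ fun j _ => this i j]
    congr 1
    ext u
    have hu : A u u = ∑ i, ∑ j, formMatrix A i j * (u j * u i) := by
      conv_lhs => rw [eucl_sum u]
      simp only [map_sum, map_smul, sum_apply, smul_apply, smul_eq_mul, Finset.mul_sum]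
      rw [Finset.sum_comm]
      simp only [formMatrix]
      refine Finset.sum_congr rfl fun k _ => Finset.sum_congr rfl fun l _ => ?_
      ring
    simp only [hu, Finset.sum_mul, mul_assoc]
  rw [this]
  field_simp

end Gauss

/-! ### The rescaled Taylor remainder -/

/-- The second-order Taylor remainder of `f` at `θ` for the increment `-√ρ u`, divided by `ρ`.
For `f = ψ` it equals `d_ψ(θ - √ρ u, θ) / ρ`. -/
def taylorRem {d : ℕ} (f : En d → ℝ) (θ : En d) (ρ : ℝ) (u : En d) : ℝ :=
  (f (θ - √ρ • u) - f θ + √ρ * fderiv ℝ f θ u) / ρ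

section Taylor

variable {d : ℕ} {f : En d → ℝ}

/-- Lagrange form of the remainder. The factor `√ρ² = ρ` cancels the division by `ρ`. -/
theorem taylorRem_eq (hf : ContDiff ℝ 2 f) (θ u : En d) {ρ : ℝ} (hρ : 0 < ρ) :
    ∃ t ∈ Set.Ioo (0 : ℝ) 1, taylorRem f θ ρ u
      = (1 / 2) * fderiv ℝ (fderiv ℝ f) (θ - (t * √ρ) • u) u u := by
  obtain ⟨t, ht, h⟩ := taylor_two hf θ (-(√ρ • u))
  refine ⟨t, ht, ?_⟩
  rw [taylorRem, div_eq_iff hρ.ne']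
  have e : θ + t • -(√ρ • u) = θ - (t * √ρ) • u := by
    rw [smul_neg, smul_smul, sub_eq_add_neg]
  rw [e] at h
  simp only [map_neg, map_smul, neg_apply, smul_apply,
    smul_eq_mul, ← sub_eq_add_neg] at h
  have hs : √ρ * √ρ = ρ := Real.mul_self_sqrt hρ.le
  generalize fderiv ℝ (fderiv ℝ f) (θ - (t * √ρ) • u) u u = X at *
  linear_combination h + (1 / 2) * X * hs

theorem taylorRem_tendsto (hf : ContDiff ℝ 2 f) (θ u : En d) :
    Tendsto (fun ρ => taylorRem f θ ρ u) (nhdsWithin 0 (Set.Ioi 0))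
      (nhds ((1 / 2) * fderiv ℝ (fderiv ℝ f) θ u u)) := by
  -- The intermediate points `θ - t(ρ) √ρ u` tend to `θ`, and the second derivative is continuous.
  have hex : ∀ ρ : ℝ, ∃ t ∈ Set.Ioo (0 : ℝ) 1, 0 < ρ → taylorRem f θ ρ u
      = (1 / 2) * fderiv ℝ (fderiv ℝ f) (θ - (t * √ρ) • u) u u := by
    intro ρ
    by_cases hρ : 0 < ρ
    · obtain ⟨t, ht, h⟩ := taylorRem_eq hf θ u hρ
      exact ⟨t, ht, fun _ => h⟩
    · exact ⟨1 / 2, by norm_num, fun h => absurd h hρ⟩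
  choose t ht h using hex
  have hsq : Tendsto (fun ρ : ℝ => √ρ) (nhdsWithin 0 (Set.Ioi 0)) (nhds 0) := by
    have := (Real.continuous_sqrt.tendsto 0).mono_left
      (nhdsWithin_le_nhds (s := Set.Ioi (0 : ℝ)))
    simpa using this
  have hts : Tendsto (fun ρ => t ρ * √ρ) (nhdsWithin 0 (Set.Ioi 0)) (nhds 0) := by
    refine squeeze_zero (fun ρ => mul_nonneg (ht ρ).1.le (Real.sqrt_nonneg _)) (fun ρ => ?_) hsq
    exact mul_le_of_le_one_left (Real.sqrt_nonneg _) (ht ρ).2.le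
  have hcont : Continuous fun s : ℝ => (1 / 2) * fderiv ℝ (fderiv ℝ f) (θ - s • u) u u := by
    have : Continuous (fderiv ℝ (fderiv ℝ f)) :=
      (hf.fderiv_right (m := 1) (by norm_num)).continuous_fderiv (by norm_num)
    fun_prop
  have := (hcont.tendsto 0).comp hts
  rw [zero_smul, sub_zero] at this
  refine this.congr' ?_
  filter_upwards [self_mem_nhdsWithin] with ρ hρ
  exact (h ρ hρ).symm

theorem taylorRem_lower (hf : ContDiff ℝ 2 f) {c : ℝ}
    (hlb : ∀ x u : En d, c * ‖u‖ ^ 2 ≤ fderiv ℝ (fderiv ℝ f) x u u)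
    (θ u : En d) {ρ : ℝ} (hρ : 0 < ρ) : c / 2 * ‖u‖ ^ 2 ≤ taylorRem f θ ρ u := by
  obtain ⟨t, -, h⟩ := taylorRem_eq hf θ u hρ
  rw [h]
  linarith [hlb (θ - (t * √ρ) • u) u]

theorem taylorRem_upper (hf : ContDiff ℝ 2 f) {C : ℝ}
    (hub : ∀ x u : En d, |fderiv ℝ (fderiv ℝ f) x u u| ≤ C * ‖u‖ ^ 2)
    (θ u : En d) {ρ : ℝ} (hρ : 0 < ρ) : |taylorRem f θ ρ u| ≤ C / 2 * ‖u‖ ^ 2 := by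
  obtain ⟨t, -, h⟩ := taylorRem_eq hf θ u hρ
  rw [h, abs_mul, abs_of_pos (by norm_num : (0 : ℝ) < 1 / 2)]
  linarith [hub (θ - (t * √ρ) • u) u]

theorem taylorRem_continuous (hf : ContDiff ℝ 2 f) (θ : En d) (ρ : ℝ) :
    Continuous (taylorRem f θ ρ) := by
  have := hf.continuous
  unfold taylorRem
  fun_prop

end Taylor

/-! ### The limit of the normalized bias -/

/-- The substitution `z = θ - √ρ u`. -/
theorem integral_rescale {d : ℕ} (θ : En d) {ρ : ℝ} (hρ : 0 < ρ) (F : En d → ℝ) :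
    ∫ z, F z = √ρ ^ d * ∫ u, F (θ - √ρ • u) := by
  have hs : 0 < √ρ := Real.sqrt_pos.2 hρ
  rw [Measure.integral_comp_smul volume (fun w => F (θ - w)) √ρ, integral_sub_left_eq_self]
  rw [abs_of_pos (by positivity), smul_eq_mul]
  simp only [finrank_euclideanSpace, Fintype.card_fin]
  field_simp

/-- Dominated convergence with the dominating function `K (1 + ‖u‖²) exp (-a ‖u‖²)`. -/
theorem tendsto_gauss {d : ℕ} {F G : ℝ → En d → ℝ} {F₀ G₀ : En d → ℝ} {K a : ℝ} (ha : 0 < a)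
    (hF : ∀ ρ, Continuous (F ρ)) (hG : ∀ ρ, Continuous (G ρ))
    (hFK : ∀ ρ > 0, ∀ u, |F ρ u| ≤ K * (1 + ‖u‖ ^ 2))
    (hGa : ∀ ρ > 0, ∀ u, a * ‖u‖ ^ 2 ≤ G ρ u)
    (hFt : ∀ u, Tendsto (fun ρ => F ρ u) (nhdsWithin 0 (Set.Ioi 0)) (nhds (F₀ u)))
    (hGt : ∀ u, Tendsto (fun ρ => G ρ u) (nhdsWithin 0 (Set.Ioi 0)) (nhds (G₀ u))) :
    Tendsto (fun ρ => ∫ u, F ρ u * Real.exp (-G ρ u)) (nhdsWithin 0 (Set.Ioi 0))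
      (nhds (∫ u, F₀ u * Real.exp (-G₀ u))) := by
  refine tendsto_integral_filter_of_dominated_convergence
    (fun u => K * ((1 + ‖u‖ ^ 2) * Real.exp (-a * ‖u‖ ^ 2))) ?_ ?_
    ((integrable_sq_gauss ha).const_mul K) ?_
  · exact Eventually.of_forall fun ρ =>
      ((hF ρ).mul (Real.continuous_exp.comp (hG ρ).neg)).aestronglyMeasurable
  · filter_upwards [self_mem_nhdsWithin] with ρ hρ
    refine Eventually.of_forall fun u => ?_
    rw [norm_mul, Real.norm_eq_abs, Real.norm_of_nonneg (Real.exp_pos _).le, ← mul_assoc]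
    have := hGa ρ hρ u
    gcongr
    · exact (abs_nonneg _).trans (hFK ρ hρ u)
    · exact hFK ρ hρ u
    · linarith
  · exact Eventually.of_forall fun u =>
      (hFt u).mul ((Real.continuous_exp.tendsto _).comp (hGt u).neg)

/-- For every `ρ > 0` the normalized bias is exactly the mean of the Taylor remainder of `p` under
the rescaled kernel: after `z = θ - √ρ u`, the constant term of the expansion of `p` contributes
`p θ`, and the linear term vanishes because the kernel is centered. -/
theorem bias_eq {d : ℕ} {p ψ : En d → ℝ} {C c : ℝ} (hc : 0 < c)
    (hp : ContDiff ℝ 2 p) (hψ : ContDiff ℝ 2 ψ)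
    (hub : ∀ x u : En d, |fderiv ℝ (fderiv ℝ p) x u u| ≤ C * ‖u‖ ^ 2)
    (hlb : ∀ x u : En d, c * ‖u‖ ^ 2 ≤ fderiv ℝ (fderiv ℝ ψ) x u u)
    (θ : En d) {D : En d → ℝ} (hD : ∀ z, D z = ψ z - ψ θ - fderiv ℝ ψ θ (z - θ))
    {ρ : ℝ} (hρ : 0 < ρ)
    (hcenter : (∫ u : En d, Real.exp (-(D (θ - √ρ • u)) / ρ) • u) = 0) :
    ((∫ z, p z * Real.exp (-(D z) / ρ)) / (∫ z, Real.exp (-(D z) / ρ)) - p θ) / ρ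
      = (∫ u, taylorRem p θ ρ u * Real.exp (-taylorRem ψ θ ρ u))
        / ∫ u, 1 * Real.exp (-taylorRem ψ θ ρ u) := by
  have hDq : ∀ u, -(D (θ - √ρ • u)) / ρ = -taylorRem ψ θ ρ u := by
    intro u
    rw [hD, taylorRem]
    simp
    ring
  have hs : 0 < √ρ := Real.sqrt_pos.2 hρ
  rw [integral_rescale θ hρ, integral_rescale θ hρ (fun z => Real.exp (-(D z) / ρ))]
  simp only [hDq] at hcenter ⊢
  have hq := taylorRem_continuous hψ θ ρ
  have hlow := fun u => taylorRem_lower hψ hlb θ u hρ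
  have hL := integrable_of_growth (half_pos hc) (fderiv ℝ p θ).continuous hq
    (linear_growth _) hlow
  have hR : Integrable fun u => taylorRem p θ ρ u * Real.exp (-taylorRem ψ θ ρ u) := by
    refine integrable_of_growth (K := |C / 2|) (half_pos hc) (taylorRem_continuous hp θ ρ) hq
      (fun u => (taylorRem_upper hp hub θ u hρ).trans ?_) hlow
    gcongr
    · exact le_abs_self _
    · linarith
  have h1 : Integrable fun u => 1 * Real.exp (-taylorRem ψ θ ρ u) :=
    integrable_of_growth (K := 1) (half_pos hc) continuous_const hq (fun u => by simp) hlow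
  have hZ : 0 < ∫ u, 1 * Real.exp (-taylorRem ψ θ ρ u) := by
    simp only [one_mul] at h1 ⊢
    exact integral_exp_pos h1
  have hL0 : ∫ u, fderiv ℝ p θ u * Real.exp (-taylorRem ψ θ ρ u) = 0 := by
    -- Integrability of the vector-valued integrand is what allows the functional `p'(θ)` to be
    -- moved inside the integral in the centering hypothesis.
    have hI : Integrable fun u : En d => Real.exp (-taylorRem ψ θ ρ u) • u := by
      refine (integrable_of_growth (K := 1) (F := fun u => ‖u‖) (half_pos hc) continuous_norm hq
        (fun u => ?_) hlow).mono' (by fun_prop) (Eventually.of_forall fun u => ?_)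
      · rw [abs_norm]
        nlinarith [sq_nonneg (‖u‖ - 1)]
      · rw [norm_smul, Real.norm_of_nonneg (Real.exp_pos _).le, mul_comm]
    have := (fderiv ℝ p θ).integral_comp_comm hI
    rw [hcenter, map_zero] at this
    rw [← this]
    simp [mul_comm]
  have hN : ∫ u, p (θ - √ρ • u) * Real.exp (-taylorRem ψ θ ρ u)
      = ρ * (∫ u, taylorRem p θ ρ u * Real.exp (-taylorRem ψ θ ρ u))
        + p θ * ∫ u, 1 * Real.exp (-taylorRem ψ θ ρ u) := by
    have e : ∀ u, p (θ - √ρ • u) * Real.exp (-taylorRem ψ θ ρ u)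
        = ρ * (taylorRem p θ ρ u * Real.exp (-taylorRem ψ θ ρ u))
          + p θ * (1 * Real.exp (-taylorRem ψ θ ρ u))
          - √ρ * (fderiv ℝ p θ u * Real.exp (-taylorRem ψ θ ρ u)) := by
      intro u
      have : p (θ - √ρ • u) = ρ * taylorRem p θ ρ u + p θ - √ρ * fderiv ℝ p θ u := by
        rw [taylorRem]
        field_simp
        ring
      rw [this]
      ring
    simp_rw [e]
    have hR1 : Integrable fun u => ρ * (taylorRem p θ ρ u * Real.exp (-taylorRem ψ θ ρ u))
        + p θ * (1 * Real.exp (-taylorRem ψ θ ρ u)) := (hR.const_mul _).add (h1.const_mul _)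
    rw [integral_sub hR1 (hL.const_mul _),
      integral_add (hR.const_mul _) (h1.const_mul _)]
    simp only [integral_const_mul, hL0, mul_zero, sub_zero]
  rw [hN]
  simp only [one_mul] at hZ ⊢
  rw [mul_div_mul_left _ _ (pow_pos hs d).ne']
  field_simp
  ring

/-- Pointwise bias for Bregman-divergence smoothing: if the probability density `p` is C² with
bounded Hessian, `ψ` is C² strictly convex with Hessian uniformly bounded below, and the
smoothing kernel is centered, then `(p_ρ(θ) − p(θ))/ρ → (1/2) Tr(H_p(θ) H_ψ(θ)⁻¹)` as
`ρ → 0⁺`. -/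
theorem statement5 {d : ℕ} (hd : 1 ≤ d) (p ψ : En d → ℝ) (C c : ℝ) (hc : 0 < c)
    (hp_c2 : ContDiff ℝ 2 p)
    (hp_int : Integrable p) (hp_nonneg : ∀ x, 0 ≤ p x) (hp_one : (∫ x, p x) = 1)
    (hHp_bd : ∀ x : En d, ‖iteratedFDeriv ℝ 2 p x‖ ≤ C)
    (hψ_c2 : ContDiff ℝ 2 ψ)
    (hψ_sc : StrictConvexOn ℝ Set.univ ψ)
    (hHψ_lb : ∀ (x u : En d), c * ‖u‖ ^ 2 ≤ iteratedFDeriv ℝ 2 ψ x ![u, u])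
    (θ : En d)
    (hHp_cont : ContinuousAt (iteratedFDeriv ℝ 2 p) θ)
    (dψ : En d → En d → ℝ)
    (hdψ : dψ = fun z t => ψ z - ψ t - ⟪gradient ψ t, z - t⟫)
    (hcenter : ∀ ρ : ℝ, 0 < ρ →
      (∫ u : En d, Real.exp (-(dψ (θ - Real.sqrt ρ • u) θ) / ρ) • u) = 0)
    (Hp Hψ : Matrix (Fin d) (Fin d) ℝ)
    (hHp : Hp = fun i j => iteratedFDeriv ℝ 2 p θ
        ![EuclideanSpace.single i (1 : ℝ), EuclideanSpace.single j (1 : ℝ)])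
    (hHψ : Hψ = fun i j => iteratedFDeriv ℝ 2 ψ θ
        ![EuclideanSpace.single i (1 : ℝ), EuclideanSpace.single j (1 : ℝ)]) :
    Tendsto
      (fun ρ : ℝ =>
        ((∫ z, p z * Real.exp (-(dψ z θ) / ρ)) / (∫ z : En d, Real.exp (-(dψ z θ) / ρ)) - p θ) / ρ)
      (nhdsWithin 0 (Set.Ioi 0))
      (nhds ((1 / 2) * Matrix.trace (Hp * Hψ⁻¹))) := by
  have hub : ∀ x u : En d, |fderiv ℝ (fderiv ℝ p) x u u| ≤ C * ‖u‖ ^ 2 := by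
    intro x u
    have h := (iteratedFDeriv ℝ 2 p x).le_opNorm ![u, u]
    rw [iteratedFDeriv_two_apply] at h
    simp only [Matrix.cons_val_zero, Matrix.cons_val_one, Fin.prod_univ_two,
      Real.norm_eq_abs] at h
    refine h.trans ?_
    rw [← pow_two]
    gcongr
    exact hHp_bd x
  have hlb : ∀ x u : En d, c * ‖u‖ ^ 2 ≤ fderiv ℝ (fderiv ℝ ψ) x u u := by
    intro x u
    simpa [iteratedFDeriv_two_apply] using hHψ_lb x u
  have hp' : Hp = formMatrix (fderiv ℝ (fderiv ℝ p) θ) := by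
    rw [hHp]; ext i j; simp [iteratedFDeriv_two_apply, formMatrix]
  have hψ' : Hψ = formMatrix (fderiv ℝ (fderiv ℝ ψ) θ) := by
    rw [hHψ]; ext i j; simp [iteratedFDeriv_two_apply, formMatrix]
  have hsymm : ∀ u v, fderiv ℝ (fderiv ℝ ψ) θ u v = fderiv ℝ (fderiv ℝ ψ) θ v u :=
    fun u v => (hψ_c2.contDiffAt.isSymmSndFDerivAt (by simp)) u v
  have hD : ∀ z, dψ z θ = ψ z - ψ θ - fderiv ℝ ψ θ (z - θ) := by
    intro z
    simp only [hdψ, gradient, InnerProductSpace.toDual_symm_apply]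
  have hnum := tendsto_gauss (K := |C / 2|) (half_pos hc)
    (taylorRem_continuous hp_c2 θ) (taylorRem_continuous hψ_c2 θ)
    (fun ρ hρ u => (taylorRem_upper hp_c2 hub θ u hρ).trans (by
      gcongr
      · exact le_abs_self _
      · linarith))
    (fun ρ hρ u => taylorRem_lower hψ_c2 hlb θ u hρ)
    (taylorRem_tendsto hp_c2 θ) (taylorRem_tendsto hψ_c2 θ)
  have hden := tendsto_gauss (F := fun _ _ => 1) (F₀ := fun _ => 1) (K := 1) (half_pos hc)
    (fun _ => continuous_const) (taylorRem_continuous hψ_c2 θ)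
    (fun ρ hρ u => by simp)
    (fun ρ hρ u => taylorRem_lower hψ_c2 hlb θ u hρ)
    (fun _ => tendsto_const_nhds) (taylorRem_tendsto hψ_c2 θ)
  have hZ := gauss_pos hc (hlb θ)
  have hlim := hnum.div hden (by simpa only [one_mul] using hZ.ne')
  have hval : (1 / 2) * Matrix.trace (Hp * Hψ⁻¹)
      = (∫ u, (1 / 2 * fderiv ℝ (fderiv ℝ p) θ u u)
          * Real.exp (-(1 / 2 * fderiv ℝ (fderiv ℝ ψ) θ u u)))
        / ∫ u, 1 * Real.exp (-(1 / 2 * fderiv ℝ (fderiv ℝ ψ) θ u u)) := by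
    simp only [mul_assoc (1 / 2 : ℝ) (fderiv ℝ (fderiv ℝ p) θ _ _), integral_const_mul,
      gauss_trace hsymm hc (hlb θ), one_mul, hp', hψ']
    rw [mul_div_assoc, mul_div_cancel_right₀ _ hZ.ne']
  rw [hval]
  refine hlim.congr' ?_
  filter_upwards [self_mem_nhdsWithin] with ρ hρ
  exact (bias_eq hc hp_c2 hψ_c2 hub hlb θ hD hρ (hcenter ρ hρ)).symm
end
end

section
/- Let d ≥ 1 and let f : ℝ^d → ℝ be L_f-Lipschitz with C_π := ∫_{ℝ^d} exp(−f(θ)) dθ ∈ (0, ∞); let π := exp(−f)/C_π and let π_ρ be the Gaussian-smoothed density for ρ > 0. Then for every θ ∈ ℝ^d, (N_ρ / D_{−d}(−L_f ρ)) · π_ρ(θ) ≤ π(θ) ≤ (N_ρ / D_{−d}(L_f ρ)) · π_ρ(θ), where N_ρ := 2^{d/2−1} Γ(d/2) / (Γ(d) exp(L_f² ρ²/4)). -/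
/-!
Writing `I(s) = ∫ exp(-s‖z‖ - ‖z‖²/(2ρ²)) dz` for the radial integral on `ℝ^d`, the Lipschitz bound
applied under the integral sign gives
`exp(-f θ) I(L) ≤ ∫ exp(-f z - ‖z - θ‖²/(2ρ²)) dz ≤ exp(-f θ) I(-L)`.
The normalizing constant of the smoothed density is the integral of a convolution, so it equals
`C_π I(0)`; hence `π_ρ(θ) / π(θ)` lies between `I(L) / I(0)` and `I(-L) / I(0)`. In polar coordinates
(`radialInt_eq`) `I(s)` is a constant independent of `s` times the one-dimensional integral
`J(sρ)` that appears in the parabolic cylinder function, and `J(0) = 2^(d/2-1) Γ(d/2)`, so the two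
ratios are exactly `D_{-d}(±Lρ) / N_ρ` (`const_div_pcf`).
-/

open MeasureTheory

noncomputable section

/-- The parabolic cylinder function
`D_{−d}(z) = (exp(−z²/4)/Γ(d)) ∫₀^∞ exp(−xz − x²/2) x^{d−1} dx`. -/
noncomputable def pcf (d : ℕ) (z : ℝ) : ℝ :=
  (Real.exp (-z ^ 2 / 4) / Real.Gamma d) *
    ∫ x in Set.Ioi (0 : ℝ), Real.exp (-(x * z) - x ^ 2 / 2) * x ^ (d - 1)

/-- The normalized density `π(θ) = exp(−f(θ))/C_π`. -/
noncomputable def nrmDensity {d : ℕ} (f : En d → ℝ) (θ : En d) : ℝ :=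
  Real.exp (-f θ) / ∫ θ' : En d, Real.exp (-f θ')

/-- The normalized Gaussian-smoothed density
`π_ρ(θ) = (1/C_{π_ρ}) ∫ exp(−f(z) − ‖z−θ‖²/(2ρ²)) dz`. -/
noncomputable def gaussSmoothed {d : ℕ} (f : En d → ℝ) (ρ : ℝ) (θ : En d) : ℝ :=
  (∫ z : En d, Real.exp (-f z - ‖z - θ‖ ^ 2 / (2 * ρ ^ 2))) /
    ∫ θ' : En d, ∫ z : En d, Real.exp (-f z - ‖z - θ'‖ ^ 2 / (2 * ρ ^ 2))

/-- The integral `∫₀^∞ exp(-xz - x²/2) x^{d-1} dx` in the definition of `D_{-d}(z)`. -/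
def pcfInt (d : ℕ) (z : ℝ) : ℝ :=
  ∫ x in Set.Ioi (0 : ℝ), Real.exp (-(x * z) - x ^ 2 / 2) * x ^ (d - 1)

/-- The integral over `ℝ^d` of the radial function `exp(-s‖z‖ - ‖z‖²/(2ρ²))`. -/
def radialInt (d : ℕ) (s ρ : ℝ) : ℝ :=
  ∫ z : En d, Real.exp (-(s * ‖z‖) - ‖z‖ ^ 2 / (2 * ρ ^ 2))

lemma integrable_radial {d : ℕ} (hd : 1 ≤ d) (s : ℝ) {ρ : ℝ} (hρ : 0 < ρ) :
    Integrable (fun z : En d => Real.exp (-(s * ‖z‖) - ‖z‖ ^ 2 / (2 * ρ ^ 2))) := by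
  have : Nonempty (Fin d) := ⟨⟨0, hd⟩⟩
  have hb : 0 < 1 / (4 * ρ ^ 2) := by positivity
  have hgauss : Integrable (fun z : En d => Real.exp (-(1 / (4 * ρ ^ 2)) * ‖z‖ ^ 2)) := by
    refine (integrable_fun_norm_addHaar (volume : Measure (En d))
      (f := fun y => Real.exp (-(1 / (4 * ρ ^ 2)) * y ^ 2))).2 ?_
    have h := integrableOn_rpow_mul_exp_neg_mul_sq hb (s := ((d - 1 : ℕ) : ℝ))
      (lt_of_lt_of_le (by norm_num) (Nat.cast_nonneg _))
    simpa using h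
  refine (hgauss.const_mul (Real.exp (s ^ 2 * ρ ^ 2))).mono' (by fun_prop) (.of_forall fun z => ?_)
  rw [Real.norm_of_nonneg (Real.exp_pos _).le, ← Real.exp_add, Real.exp_le_exp]
  -- Complete the square: the gap between the exponents is `(sρ + ‖z‖/(2ρ))²`.
  have h : s ^ 2 * ρ ^ 2 + -(1 / (4 * ρ ^ 2)) * ‖z‖ ^ 2
      - (-(s * ‖z‖) - ‖z‖ ^ 2 / (2 * ρ ^ 2)) = (s * ρ + ‖z‖ / (2 * ρ)) ^ 2 := by
    field_simp
    ring
  nlinarith [sq_nonneg (s * ρ + ‖z‖ / (2 * ρ))]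

lemma radialInt_pos {d : ℕ} (hd : 1 ≤ d) (s : ℝ) {ρ : ℝ} (hρ : 0 < ρ) : 0 < radialInt d s ρ :=
  integral_exp_pos (integrable_radial hd s hρ)

/-- Polar coordinates and the substitution `y = ρx` reduce `radialInt` to `pcfInt`, with a
constant that does not depend on `s`. -/
lemma radialInt_eq {d : ℕ} (hd : 1 ≤ d) (s : ℝ) {ρ : ℝ} (hρ : 0 < ρ) :
    radialInt d s ρ =
      (d * volume.real (Metric.ball (0 : En d) 1) * ρ ^ d) * pcfInt d (s * ρ) := by
  have : Nonempty (Fin d) := ⟨⟨0, hd⟩⟩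
  have hsub := integral_comp_mul_left_Ioi
    (fun y : ℝ => y ^ (d - 1) * Real.exp (-(s * y) - y ^ 2 / (2 * ρ ^ 2))) 0 hρ
  have hJ : (∫ x in Set.Ioi (0 : ℝ),
      (ρ * x) ^ (d - 1) * Real.exp (-(s * (ρ * x)) - (ρ * x) ^ 2 / (2 * ρ ^ 2)))
      = ρ ^ (d - 1) * pcfInt d (s * ρ) := by
    rw [pcfInt, ← integral_const_mul]
    congr 1 with x
    have : -(s * (ρ * x)) - (ρ * x) ^ 2 / (2 * ρ ^ 2) = -(x * (s * ρ)) - x ^ 2 / 2 := by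
      field_simp
    rw [this]
    ring
  rw [hJ, mul_zero, smul_eq_mul] at hsub
  have h := integral_fun_norm_addHaar (volume : Measure (En d))
    (fun y => Real.exp (-(s * y) - y ^ 2 / (2 * ρ ^ 2)))
  simp only [finrank_euclideanSpace, Fintype.card_fin, smul_eq_mul, nsmul_eq_mul] at h
  have hK := (eq_inv_mul_iff_mul_eq₀ hρ.ne').1 hsub
  rw [radialInt, h, ← hK]
  obtain ⟨k, rfl⟩ : ∃ k, d = k + 1 := ⟨d - 1, by omega⟩
  simp only [Nat.add_sub_cancel, pow_succ]
  ring

lemma pcfInt_zero {d : ℕ} (hd : 1 ≤ d) :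
    pcfInt d 0 = 2 ^ ((d : ℝ) / 2 - 1) * Real.Gamma ((d : ℝ) / 2) := by
  have h := integral_rpow_mul_exp_neg_mul_rpow (p := 2) (q := ((d - 1 : ℕ) : ℝ)) (b := 1 / 2)
    (by norm_num) (lt_of_lt_of_le (by norm_num) (Nat.cast_nonneg _)) (by norm_num)
  have hq : (((d - 1 : ℕ) : ℝ) + 1) / 2 = d / 2 := by
    rw [Nat.cast_sub hd]; simp
  rw [neg_div, hq] at h
  have h2 : (1 / 2 : ℝ) ^ (-((d : ℝ) / 2)) * (1 / 2) = 2 ^ ((d : ℝ) / 2 - 1) := by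
    rw [one_div, Real.inv_rpow (by norm_num), Real.rpow_neg (by norm_num), inv_inv,
      Real.rpow_sub (by norm_num), Real.rpow_one]
    ring
  rw [h2] at h
  rw [← h, pcfInt]
  congr 1 with x
  simp only [Real.rpow_natCast, Real.rpow_ofNat]
  rw [mul_comm]
  congr 2
  ring

/-- The constant `N_ρ / D_{-d}(z)` with `z² = (Lρ)²` is a ratio of radial integrals. -/
lemma const_div_pcf {d : ℕ} (hd : 1 ≤ d) (L s : ℝ) (hs : s ^ 2 = L ^ 2) {ρ : ℝ} (hρ : 0 < ρ) :
    2 ^ ((d : ℝ) / 2 - 1) * Real.Gamma ((d : ℝ) / 2) /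
      (Real.Gamma d * Real.exp (L ^ 2 * ρ ^ 2 / 4)) / pcf d (s * ρ)
      = radialInt d 0 ρ / radialInt d s ρ := by
  have hΓ : Real.Gamma d ≠ 0 := (Real.Gamma_pos_of_pos (by exact_mod_cast hd)).ne'
  have hI := (radialInt_pos hd s hρ).ne'
  have he : Real.exp (-(s * ρ) ^ 2 / 4) = (Real.exp (L ^ 2 * ρ ^ 2 / 4))⁻¹ := by
    rw [← Real.exp_neg, ← hs]
    congr 1
    ring
  have hp : pcf d (s * ρ) = Real.exp (-(s * ρ) ^ 2 / 4) / Real.Gamma d * pcfInt d (s * ρ) := rfl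
  rw [radialInt_eq hd s hρ] at hI ⊢
  rw [radialInt_eq hd 0 hρ, zero_mul, hp, he, ← pcfInt_zero hd,
    mul_div_mul_left _ _ (left_ne_zero_of_mul hI)]
  have hJ := right_ne_zero_of_mul hI
  have hE := (Real.exp_pos (L ^ 2 * ρ ^ 2 / 4)).ne'
  field_simp

/-- The normalizing constant of the smoothed density is the integral of the convolution of
`exp(-f)` with a Gaussian. -/
lemma smoothed_const {d : ℕ} (hd : 1 ≤ d) (f : En d → ℝ)
    (hint : Integrable (fun θ : En d => Real.exp (-f θ))) {ρ : ℝ} (hρ : 0 < ρ) :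
    ∫ θ' : En d, ∫ z : En d, Real.exp (-f z - ‖z - θ'‖ ^ 2 / (2 * ρ ^ 2))
      = (∫ θ : En d, Real.exp (-f θ)) * radialInt d 0 ρ := by
  have h := integral_convolution (ContinuousLinearMap.mul ℝ ℝ) hint (integrable_radial hd 0 hρ)
  simp only [convolution, ContinuousLinearMap.mul_apply'] at h
  rw [radialInt, ← h]
  congr 1 with θ'
  congr 1 with z
  rw [← Real.exp_add, norm_sub_rev]
  congr 1
  ring

/-- Pointwise sandwich: for an `L`-Lipschitz potential `f` with `C_π ∈ (0,∞)`,
`(N_ρ/D_{−d}(−Lρ)) π_ρ(θ) ≤ π(θ) ≤ (N_ρ/D_{−d}(Lρ)) π_ρ(θ)` for every `θ`. -/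
theorem statement18 {d : ℕ} (hd : 1 ≤ d) (f : En d → ℝ) (L : ℝ)
    (hLip : ∀ θ η : En d, |f θ - f η| ≤ L * ‖θ - η‖)
    (hint : Integrable (fun θ : En d => Real.exp (-f θ)))
    (hpos : 0 < ∫ θ : En d, Real.exp (-f θ))
    (ρ : ℝ) (hρ : 0 < ρ)
    (N : ℝ) (hN : N = 2 ^ ((d : ℝ) / 2 - 1) * Real.Gamma ((d : ℝ) / 2) /
      (Real.Gamma d * Real.exp (L ^ 2 * ρ ^ 2 / 4)))
    (θ : En d) :
    N / pcf d (-(L * ρ)) * gaussSmoothed f ρ θ ≤ nrmDensity f θ ∧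
      nrmDensity f θ ≤ N / pcf d (L * ρ) * gaussSmoothed f ρ θ := by
  have hG := radialInt_pos hd 0 hρ
  have hup : ∀ z, Real.exp (-f z - ‖z - θ‖ ^ 2 / (2 * ρ ^ 2)) ≤
      Real.exp (-f θ) * Real.exp (-(-L * ‖z - θ‖) - ‖z - θ‖ ^ 2 / (2 * ρ ^ 2)) := fun z => by
    rw [← Real.exp_add, Real.exp_le_exp]
    linarith [(abs_le.1 (hLip z θ)).1]
  have hlow : ∀ z, Real.exp (-f θ) * Real.exp (-(L * ‖z - θ‖) - ‖z - θ‖ ^ 2 / (2 * ρ ^ 2)) ≤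
      Real.exp (-f z - ‖z - θ‖ ^ 2 / (2 * ρ ^ 2)) := fun z => by
    rw [← Real.exp_add, Real.exp_le_exp]
    linarith [(abs_le.1 (hLip z θ)).2]
  have hshift : ∀ s, ∫ z : En d, Real.exp (-f θ) *
      Real.exp (-(s * ‖z - θ‖) - ‖z - θ‖ ^ 2 / (2 * ρ ^ 2)) =
      Real.exp (-f θ) * radialInt d s ρ := fun s => by
    rw [integral_const_mul, radialInt]
    congr 1
    exact integral_sub_right_eq_self
      (fun z : En d => Real.exp (-(s * ‖z‖) - ‖z‖ ^ 2 / (2 * ρ ^ 2))) θ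
  have hishift : ∀ s, Integrable fun z : En d => Real.exp (-f θ) *
      Real.exp (-(s * ‖z - θ‖) - ‖z - θ‖ ^ 2 / (2 * ρ ^ 2)) := fun s =>
    ((integrable_radial hd s hρ).comp_sub_right θ).const_mul _
  have hA : Integrable fun z : En d => Real.exp (-f z - ‖z - θ‖ ^ 2 / (2 * ρ ^ 2)) := by
    refine (hishift (-L)).mono' ?_ (.of_forall fun z => ?_)
    · simp only [sub_eq_add_neg (-f _), Real.exp_add]
      exact hint.aestronglyMeasurable.mul (by fun_prop)
    · rw [Real.norm_of_nonneg (Real.exp_pos _).le]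
      exact hup z
  have hAup := integral_mono hA (hishift (-L)) hup
  have hAlow := integral_mono (hishift L) hA hlow
  rw [hshift] at hAup hAlow
  have hIL := radialInt_pos hd L hρ
  have hInL := radialInt_pos hd (-L) hρ
  rw [hN, ← neg_mul, const_div_pcf hd L (-L) (by ring) hρ, const_div_pcf hd L L rfl hρ,
    gaussSmoothed, nrmDensity, smoothed_const hd f hint hρ]
  generalize (∫ z : En d, Real.exp (-f z - ‖z - θ‖ ^ 2 / (2 * ρ ^ 2))) = A at *
  generalize (∫ z : En d, Real.exp (-f z)) = C at *
  -- The factor `I(0)` cancels against the normalizing constant of the smoothed density.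
  have hcancel : ∀ I : ℝ, radialInt d 0 ρ / I * (A / (C * radialInt d 0 ρ)) = A / I / C :=
    fun I => by field_simp
  rw [hcancel, hcancel]
  constructor
  · gcongr
    exact (div_le_iff₀ hInL).2 hAup
  · gcongr
    exact (le_div_iff₀ hIL).2 hAlow
end
end
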